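/- Let S = {(1,1), (−1,1), (1,−1)} ⊂ ℤ² and let cₙ be the number of quarter-plane walks of length n with steps S. Let α = 1 − 2·∑_{n≥0} (−1)ⁿ/(F(2n+1)·F(2n+3)), where F denotes the Fibonacci sequence with F(1) = F(2) = 1. Then there exists a constant C > 0 such that for all n, |cₙ − α·3ⁿ| ≤ C·(2√2)ⁿ. -/

import Mathlib

/-- The step set S = {(1,1), (−1,1), (1,−1)}. -/
def stepsS : Set (ℤ × ℤ) := {(1, 1), (-1, 1), (1, -1)}

/-- A quarter-plane walk of length `n` with steps from `S`. -/
def IsQuarterWalk (S : Set (ℤ × ℤ)) (n : ℕ) (p : Fin (n + 1) → ℤ × ℤ) : Prop :=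
  p 0 = (0, 0) ∧
  (∀ k : Fin n, p k.succ - p k.castSucc ∈ S) ∧
  (∀ k : Fin (n + 1), 0 ≤ (p k).1 ∧ 0 ≤ (p k).2)

/-- The number of quarter-plane walks of length `n` with steps `S`. -/
noncomputable def numWalks (n : ℕ) : ℕ :=
  Nat.card {p : Fin (n + 1) → ℤ × ℤ // IsQuarterWalk stepsS n p}

/-- The constant α = 1 − 2·∑ (−1)ⁿ/(F(2n+1)F(2n+3)). -/
noncomputable def alphaS : ℝ :=
  1 - 2 * ∑' n : ℕ, (-1 : ℝ) ^ n / ((Nat.fib (2 * n + 1) : ℝ) * (Nat.fib (2 * n + 3) : ℝ))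

/-- Walks from an arbitrary starting point. -/
def walksFrom (n : ℕ) (s : ℤ × ℤ) : Set (Fin (n + 1) → ℤ × ℤ) :=
  {p | p 0 = s ∧ (∀ k : Fin n, p k.succ - p k.castSucc ∈ stepsS) ∧
    (∀ k : Fin (n + 1), 0 ≤ (p k).1 ∧ 0 ≤ (p k).2)}

/-- Transfer operator of the walk. -/
def TT (f : ℕ → ℕ → ℝ) : ℕ → ℕ → ℝ := fun i j =>
  f (i + 1) (j + 1) + (if i = 0 then 0 else f (i - 1) (j + 1)) +
    (if j = 0 then 0 else f (i + 1) (j - 1))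

/-- Weighted sum over the endpoints of the walks of length n from the origin. -/
def EE (n : ℕ) (f : ℕ → ℕ → ℝ) : ℝ := (TT^[n] f) 0 0

lemma walksFrom_zero (i j : ℕ) : walksFrom 0 ((i : ℤ), (j : ℤ)) = {fun _ => ((i : ℤ), (j : ℤ))} := by
  ext p
  simp only [walksFrom, Set.mem_ofPred_eq, Set.mem_singleton_iff]
  constructor
  · rintro ⟨h, -, -⟩
    funext k
    have hk : k = 0 := Fin.ext (by simp)
    rw [hk, h]
  · rintro rfl
    refine ⟨rfl, fun k => k.elim0, fun k => ⟨by positivity, by positivity⟩⟩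

lemma walksFrom_empty (n : ℕ) (s : ℤ × ℤ) (h : s.1 < 0 ∨ s.2 < 0) : walksFrom n s = ∅ := by
  ext p
  simp only [walksFrom, Set.mem_ofPred_eq, Set.mem_empty_iff_false, iff_false]
  rintro ⟨h0, -, h1⟩
  have := h1 0
  rw [h0] at this
  omega

lemma walksFrom_succ (n i j : ℕ) : walksFrom (n + 1) ((i : ℤ), (j : ℤ)) =
    Fin.cons (α := fun _ : Fin (n + 2) => ℤ × ℤ) ((i : ℤ), (j : ℤ)) ''
      (walksFrom n ((i : ℤ) + 1, (j : ℤ) + 1) ∪ walksFrom n ((i : ℤ) - 1, (j : ℤ) + 1) ∪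
        walksFrom n ((i : ℤ) + 1, (j : ℤ) - 1)) := by
  ext p
  constructor
  · rintro ⟨h0, h1, h2⟩
    refine ⟨Fin.tail p, ?_, ?_⟩
    · have hs := h1 0
      have hp : p (Fin.castSucc 0) = ((i : ℤ), (j : ℤ)) := h0
      rw [hp] at hs
      have key : ∀ s, p (Fin.succ 0) = s → Fin.tail p ∈ walksFrom n s := by
        intro s hs
        refine ⟨hs, fun k => ?_, fun k => h2 k.succ⟩
        exact h1 k.succ
      simp only [stepsS, Set.mem_insert_iff, Set.mem_singleton_iff, sub_eq_iff_eq_add] at hs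
      rcases hs with hs | hs | hs
      · left; left; apply key; rw [hs]; ext <;> simp <;> ring
      · left; right; apply key; rw [hs]; ext <;> simp <;> ring
      · right; apply key; rw [hs]; ext <;> simp <;> ring
    · rw [← h0]; exact Fin.cons_self_tail p
  · rintro ⟨q, hq, rfl⟩
    have key : ∀ s, s - ((i : ℤ), (j : ℤ)) ∈ stepsS → q ∈ walksFrom n s →
        (Fin.cons ((i : ℤ), (j : ℤ)) q : Fin (n + 2) → ℤ × ℤ) ∈
          walksFrom (n + 1) ((i : ℤ), (j : ℤ)) := by
      rintro s hs ⟨h0, h1, h2⟩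
      refine ⟨rfl, fun k => ?_, fun k => ?_⟩
      · refine Fin.cases ?_ (fun k => ?_) k
        · simpa [h0] using hs
        · have := h1 k
          rw [← Fin.succ_castSucc]
          simpa using this
      · refine Fin.cases ?_ (fun k => ?_) k
        · simp
        · simpa using h2 k
    rcases hq with (hq | hq) | hq
    · exact key _ (by simp [stepsS]) hq
    · exact key _ (by simp [stepsS]) hq
    · exact key _ (by simp [stepsS]) hq

lemma walksFrom_disjoint (n : ℕ) (s t : ℤ × ℤ) (h : s ≠ t) :
    Disjoint (walksFrom n s) (walksFrom n t) := by
  rw [Set.disjoint_left]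
  rintro p ⟨h1, -⟩ ⟨h2, -⟩
  exact h (h1.symm.trans h2)

lemma walksFrom_count (n : ℕ) : ∀ i j : ℕ, (walksFrom n ((i : ℤ), (j : ℤ))).Finite ∧
    ((walksFrom n ((i : ℤ), (j : ℤ))).ncard : ℝ) = (TT^[n] (fun _ _ => 1)) i j := by
  induction n with
  | zero => intro i j; rw [walksFrom_zero]; simp
  | succ n ih =>
    intro i j
    have hA := ih (i + 1) (j + 1)
    have hB : (walksFrom n ((i : ℤ) - 1, (j : ℤ) + 1)).Finite ∧
        ((walksFrom n ((i : ℤ) - 1, (j : ℤ) + 1)).ncard : ℝ) =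
          if i = 0 then 0 else (TT^[n] (fun _ _ => 1)) (i - 1) (j + 1) := by
      rcases i with _ | i
      · rw [walksFrom_empty _ _ (by left; simp)]; simp
      · have := ih i (j + 1)
        push_cast at this ⊢
        simpa using this
    have hC : (walksFrom n ((i : ℤ) + 1, (j : ℤ) - 1)).Finite ∧
        ((walksFrom n ((i : ℤ) + 1, (j : ℤ) - 1)).ncard : ℝ) =
          if j = 0 then 0 else (TT^[n] (fun _ _ => 1)) (i + 1) (j - 1) := by
      rcases j with _ | j
      · rw [walksFrom_empty _ _ (by right; simp)]; simp
      · have := ih (i + 1) j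
        push_cast at this ⊢
        simpa using this
    push_cast at hA
    rw [walksFrom_succ]
    refine ⟨((hA.1.union hB.1).union hC.1).image _, ?_⟩
    rw [Set.ncard_image_of_injective _ (Fin.cons_right_injective _),
      Set.ncard_union_eq _ (hA.1.union hB.1) hC.1, Set.ncard_union_eq _ hA.1 hB.1]
    · push_cast
      rw [hA.2, hB.2, hC.2, Function.iterate_succ_apply']
      rfl
    · apply walksFrom_disjoint; simp; omega
    · rw [Set.disjoint_union_left]
      constructor <;> apply walksFrom_disjoint <;> simp <;> omega

lemma numWalks_eq (n : ℕ) : (numWalks n : ℝ) = EE n (fun _ _ => 1) := by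
  have := (walksFrom_count n 0 0).2
  rw [EE, ← this]
  rfl

lemma TT_mono {f g : ℕ → ℕ → ℝ} (h : f ≤ g) : TT f ≤ TT g := by
  intro i j
  unfold TT
  have h1 := h (i + 1) (j + 1)
  have h2 := h (i - 1) (j + 1)
  have h3 := h (i + 1) (j - 1)
  split_ifs <;> simp <;> linarith

lemma EE_mono (n : ℕ) {f g : ℕ → ℕ → ℝ} (h : f ≤ g) : EE n f ≤ EE n g :=
  (Monotone.iterate (fun _ _ h => TT_mono h) n h) 0 0

lemma TT_lin (a b c : ℝ) (f g h : ℕ → ℕ → ℝ) :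
    TT (a • f + b • g + c • h) = a • TT f + b • TT g + c • TT h := by
  funext i j
  simp only [TT, Pi.add_apply, Pi.smul_apply, smul_eq_mul]
  split_ifs <;> ring

lemma EE_lin (n : ℕ) (a b c : ℝ) (f g h : ℕ → ℕ → ℝ) :
    EE n (a • f + b • g + c • h) = a * EE n f + b * EE n g + c * EE n h := by
  have : TT^[n] (a • f + b • g + c • h) = a • TT^[n] f + b • TT^[n] g + c • TT^[n] h := by
    induction n with
    | zero => rfl
    | succ n ih => simp only [Function.iterate_succ_apply', ih, TT_lin]
  simp [EE, this]

lemma EE_nonneg (n : ℕ) {f : ℕ → ℕ → ℝ} (h : 0 ≤ f) : 0 ≤ EE n f := by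
  have h1 := EE_mono n h
  have h2 := EE_lin n 0 0 0 0 0 0
  simp at h2
  rwa [h2] at h1

lemma EE_swap (n : ℕ) (f : ℕ → ℕ → ℝ) : EE n (fun i j => f j i) = EE n f := by
  have : TT^[n] (fun i j => f j i) = fun i j => (TT^[n] f) j i := by
    induction n with
    | zero => rfl
    | succ n ih =>
      simp only [Function.iterate_succ_apply', ih]
      funext i j
      simp only [TT]
      ring
  simp [EE, this]

/-- Monomial weight. -/
def ww (x y : ℝ) : ℕ → ℕ → ℝ := fun i j => x ^ i * y ^ j

/-- Boundary weight. -/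
def uu (x : ℝ) : ℕ → ℕ → ℝ := fun i j => if j = 0 then x ^ i else 0

lemma TT_ww (x y : ℝ) (hx : x ≠ 0) (hy : y ≠ 0) :
    TT (ww x y) = (x * y + y / x + x / y) • ww x y + (-(y / x)) • (fun i j => uu y j i) +
      (-(x / y)) • uu x := by
  funext i j
  simp only [TT, ww, uu, Pi.add_apply, Pi.smul_apply, smul_eq_mul]
  rcases i with _ | i <;> rcases j with _ | j <;> simp <;> field_simp <;> ring

lemma EE_succ_ww (n : ℕ) (x y : ℝ) (hx : x ≠ 0) (hy : y ≠ 0) :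
    EE (n + 1) (ww x y) = (x * y + y / x + x / y) * EE n (ww x y) - (y / x) * EE n (uu y)
      - (x / y) * EE n (uu x) := by
  have h : EE (n + 1) (ww x y) = EE n (TT (ww x y)) := by
    simp [EE, Function.iterate_succ_apply]
  rw [h, TT_ww x y hx hy, EE_lin, EE_swap n (uu y)]
  ring

lemma uu_nonneg {x : ℝ} (hx : 0 ≤ x) : 0 ≤ uu x := by
  intro i j
  simp only [uu, Pi.zero_apply]
  split_ifs <;> positivity

lemma ww_nonneg {x y : ℝ} (hx : 0 ≤ x) (hy : 0 ≤ y) : 0 ≤ ww x y := by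
  intro i j
  simp only [ww, Pi.zero_apply]
  positivity

lemma ww_bound (n : ℕ) : EE n (ww 1 (1 / √2)) ≤ (2 * √2) ^ n := by
  have hs : (0 : ℝ) < √2 := by positivity
  have h2 : √2 * √2 = 2 := Real.mul_self_sqrt (by norm_num)
  induction n with
  | zero => simp [EE, ww]
  | succ n ih =>
    rw [EE_succ_ww n _ _ one_ne_zero (by positivity)]
    have h3 : (1 * (1 / √2) + 1 / √2 / 1 + 1 / (1 / √2)) = 2 * √2 := by
      field_simp
      nlinarith
    have h4 : 0 ≤ 1 / √2 / 1 * EE n (uu (1 / √2)) :=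
      mul_nonneg (by positivity) (EE_nonneg n (uu_nonneg (by positivity)))
    have h5 : 0 ≤ 1 / (1 / √2) * EE n (uu 1) :=
      mul_nonneg (by positivity) (EE_nonneg n (uu_nonneg (by positivity)))
    rw [h3, pow_succ]
    nlinarith

lemma ww_le (n : ℕ) {x y : ℝ} (hx : 0 ≤ x) (hy : 0 ≤ y) (hx1 : x ≤ 1) (hy1 : y ≤ 1 / √2) :
    EE n (ww x y) ≤ (2 * √2) ^ n := by
  refine le_trans (EE_mono n ?_) (ww_bound n)
  intro i j
  simp only [ww]
  gcongr

lemma uu_le_one (n : ℕ) {x : ℝ} (hx : 0 ≤ x) (hx1 : x ≤ 1) : EE n (uu x) ≤ EE n (uu 1) := by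
  refine EE_mono n ?_
  intro i j
  simp only [uu]
  split_ifs
  · gcongr
  · rfl

lemma uu_one_le (n : ℕ) : EE n (uu 1) ≤ (2 * √2) ^ n := by
  refine le_trans (EE_mono n ?_) (ww_bound n)
  intro i j
  simp only [uu, ww]
  split_ifs with h
  · simp [h]
  · positivity

/-- The ratio of the geometric bounds. -/
noncomputable def rr : ℝ := 2 * √2 / 3

lemma rr_pos : 0 < rr := by unfold rr; positivity

lemma rr_lt : rr < 1 := by
  unfold rr
  have h2 : √2 * √2 = 2 := Real.mul_self_sqrt (by norm_num)
  have : 0 < √2 := by positivity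
  rw [div_lt_one (by norm_num)]
  nlinarith

lemma uu_term_le (n : ℕ) {x : ℝ} (hx : 0 ≤ x) (hx1 : x ≤ 1) : EE n (uu x) / 3 ^ n ≤ rr ^ n := by
  rw [rr, div_pow]
  gcongr
  exact (uu_le_one n hx hx1).trans (uu_one_le n)

lemma uu_summable {x : ℝ} (hx : 0 ≤ x) (hx1 : x ≤ 1) :
    Summable (fun n => EE n (uu x) / 3 ^ n) := by
  refine Summable.of_nonneg_of_le (fun n => ?_) (fun n => uu_term_le n hx hx1)
    (summable_geometric_of_lt_one rr_pos.le rr_lt)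
  have := EE_nonneg n (uu_nonneg hx)
  positivity

/-- The boundary generating function at t = 1/3. -/
noncomputable def RR (x : ℝ) : ℝ := ∑' n, EE n (uu x) / 3 ^ n

lemma RR_nonneg {x : ℝ} (hx : 0 ≤ x) : 0 ≤ RR x := by
  refine tsum_nonneg (fun n => ?_)
  have := EE_nonneg n (uu_nonneg hx)
  positivity

lemma RR_le {x : ℝ} (hx : 0 ≤ x) (hx1 : x ≤ 1) : RR x ≤ RR 1 := by
  refine Summable.tsum_le_tsum (fun n => ?_) (uu_summable hx hx1) (uu_summable zero_le_one le_rfl)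
  have := uu_le_one n hx hx1
  gcongr

lemma kernel_eq {x y : ℝ} (hx : 0 < x) (hy : 0 < y) (hx1 : x ≤ 1) (hy1 : y ≤ 1 / √2)
    (hy2 : y ≤ 1) (hK : x * y + y / x + x / y = 3) :
    x * y = (x ^ 2 * RR x + y ^ 2 * RR y) / 3 := by
  have hstep : ∀ n, EE n (ww x y) / 3 ^ n - EE (n + 1) (ww x y) / 3 ^ (n + 1) =
      (y / x / 3) * (EE n (uu y) / 3 ^ n) + (x / y / 3) * (EE n (uu x) / 3 ^ n) := by
    intro n
    rw [EE_succ_ww n x y hx.ne' hy.ne', hK, pow_succ]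
    field_simp
    ring
  have hsum : HasSum (fun n => (y / x / 3) * (EE n (uu y) / 3 ^ n) +
      (x / y / 3) * (EE n (uu x) / 3 ^ n)) ((y / x / 3) * RR y + (x / y / 3) * RR x) :=
    ((uu_summable hy.le hy2).hasSum.mul_left _).add ((uu_summable hx.le hx1).hasSum.mul_left _)
  have h1 := hsum.tendsto_sum_nat
  have h2 : ∀ N, ∑ n ∈ Finset.range N, ((y / x / 3) * (EE n (uu y) / 3 ^ n) +
      (x / y / 3) * (EE n (uu x) / 3 ^ n)) = 1 - EE N (ww x y) / 3 ^ N := by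
    intro N
    rw [← Finset.sum_congr rfl (fun n _ => hstep n), Finset.sum_range_sub']
    simp [EE, ww]
  simp only [h2] at h1
  have h3 : Filter.Tendsto (fun N => EE N (ww x y) / 3 ^ N) Filter.atTop (nhds 0) := by
    refine squeeze_zero (fun n => ?_) (fun n => ?_)
      (tendsto_pow_atTop_nhds_zero_of_lt_one rr_pos.le rr_lt)
    · have := EE_nonneg n (ww_nonneg hx.le hy.le)
      positivity
    · rw [rr, div_pow]
      have := ww_le n hx.le hy.le hx1 hy1
      gcongr
  have h4 := tendsto_nhds_unique h1 (tendsto_const_nhds.sub h3)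
  field_simp at h4
  linarith

/-- The iterated kernel roots. -/
noncomputable def xx (n : ℕ) : ℝ := 1 / (Nat.fib (2 * n + 1) : ℝ)

lemma fib_markov (n : ℕ) : (Nat.fib (2 * n + 1) : ℝ) ^ 2 + (Nat.fib (2 * n + 3) : ℝ) ^ 2 + 1 =
    3 * Nat.fib (2 * n + 1) * Nat.fib (2 * n + 3) := by
  induction n with
  | zero => norm_num [Nat.fib]
  | succ n ih =>
    have h : (Nat.fib (2 * (n + 1) + 3) : ℝ) =
        3 * Nat.fib (2 * n + 3) - Nat.fib (2 * n + 1) := by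
      have e1 : Nat.fib (2 * n + 3) = Nat.fib (2 * n + 1) + Nat.fib (2 * n + 2) := Nat.fib_add_two
      have e2 : Nat.fib (2 * n + 4) = Nat.fib (2 * n + 2) + Nat.fib (2 * n + 3) := Nat.fib_add_two
      have e3 : Nat.fib (2 * n + 5) = Nat.fib (2 * n + 3) + Nat.fib (2 * n + 4) := Nat.fib_add_two
      rw [show 2 * (n + 1) + 3 = 2 * n + 5 by ring, e3, e2]
      push_cast [e1]
      ring
    rw [h, show 2 * (n + 1) + 1 = 2 * n + 3 by ring]
    linarith

lemma fib_pos' (n : ℕ) : (0 : ℝ) < Nat.fib (2 * n + 1) := by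
  exact_mod_cast Nat.fib_pos.2 (by omega)

lemma xx_pos (n : ℕ) : 0 < xx n := by
  have := fib_pos' n
  unfold xx; positivity

lemma xx_le (n : ℕ) : xx n ≤ 1 := by
  unfold xx
  rw [div_le_one (fib_pos' n)]
  exact_mod_cast Nat.fib_pos.2 (by omega)

lemma xx_le' (n : ℕ) : xx (n + 1) ≤ 1 / √2 := by
  unfold xx
  have h : (2 : ℝ) ≤ Nat.fib (2 * (n + 1) + 1) := by
    have : Nat.fib 3 ≤ Nat.fib (2 * (n + 1) + 1) := Nat.fib_mono (by omega)
    exact_mod_cast this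
  have h2 : √2 * √2 = 2 := Real.mul_self_sqrt (by norm_num)
  have : 0 < √2 := by positivity
  gcongr
  nlinarith

lemma xx_kernel (n : ℕ) :
    xx n * xx (n + 1) + xx (n + 1) / xx n + xx n / xx (n + 1) = 3 := by
  have h := fib_markov n
  have h1 := fib_pos' n
  have h2 := fib_pos' (n + 1)
  simp only [xx]
  rw [show 2 * (n + 1) + 1 = 2 * n + 3 by ring] at *
  field_simp
  linarith

lemma xx_step (n : ℕ) :
    xx n * xx (n + 1) = (xx n ^ 2 * RR (xx n) + xx (n + 1) ^ 2 * RR (xx (n + 1))) / 3 :=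
  kernel_eq (xx_pos n) (xx_pos _) (xx_le n) (xx_le' n) (xx_le _) (xx_kernel n)

lemma xx_half (n : ℕ) : xx n ≤ (1 / 2) ^ n := by
  have h : 2 ^ n ≤ Nat.fib (2 * n + 1) := by
    induction n with
    | zero => simp
    | succ n ih =>
      have e1 : Nat.fib (2 * n + 3) = Nat.fib (2 * n + 1) + Nat.fib (2 * n + 2) := Nat.fib_add_two
      have e2 : Nat.fib (2 * n + 1) ≤ Nat.fib (2 * n + 2) := Nat.fib_mono (by omega)
      rw [show 2 * (n + 1) + 1 = 2 * n + 3 by ring, pow_succ]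
      omega
  unfold xx
  rw [div_pow, one_pow]
  have h' : (2 : ℝ) ^ n ≤ Nat.fib (2 * n + 1) := by exact_mod_cast h
  gcongr

lemma xx_sum : ∑' n : ℕ, (-1 : ℝ) ^ n / ((Nat.fib (2 * n + 1) : ℝ) * (Nat.fib (2 * n + 3) : ℝ)) =
    RR 1 / 3 := by
  have hterm : ∀ n : ℕ, (-1 : ℝ) ^ n / ((Nat.fib (2 * n + 1) : ℝ) * (Nat.fib (2 * n + 3) : ℝ)) =
      (-1) ^ n * (xx n ^ 2 * RR (xx n) / 3) -
        (-1) ^ (n + 1) * (xx (n + 1) ^ 2 * RR (xx (n + 1)) / 3) := by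
    intro n
    have h := xx_step n
    have h1 : (-1 : ℝ) ^ n / ((Nat.fib (2 * n + 1) : ℝ) * (Nat.fib (2 * n + 3) : ℝ)) =
        (-1) ^ n * (xx n * xx (n + 1)) := by
      simp only [xx]
      rw [show 2 * (n + 1) + 1 = 2 * n + 3 by ring]
      have := fib_pos' n
      have h2 := fib_pos' (n + 1)
      rw [show 2 * (n + 1) + 1 = 2 * n + 3 by ring] at h2
      field_simp
    rw [h1, h, pow_succ]
    ring
  have hb : ∀ n, |(-1) ^ n * (xx n ^ 2 * RR (xx n) / 3)| ≤ (RR 1 / 3) * (1 / 2) ^ n := by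
    intro n
    have h1 := RR_nonneg (xx_pos n).le
    have h2 := RR_le (xx_pos n).le (xx_le n)
    have h3 := xx_half n
    have h4 := xx_pos n
    have h5 : xx n ^ 2 ≤ (1 / 2) ^ n := by nlinarith [xx_le n]
    rw [abs_mul, abs_pow, abs_neg, abs_one, one_pow, one_mul, abs_of_nonneg (by positivity)]
    have : xx n ^ 2 * RR (xx n) ≤ (1 / 2) ^ n * RR 1 := by gcongr
    linarith
  have hS : Summable (fun n : ℕ => (-1 : ℝ) ^ n * (xx n ^ 2 * RR (xx n) / 3)) :=
    Summable.of_norm_bounded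
      ((summable_geometric_of_lt_one (by norm_num) (by norm_num : (1 / 2 : ℝ) < 1)).mul_left _) hb
  rw [tsum_congr hterm, (hS.tsum_sub ((summable_nat_add_iff 1).2 hS)), hS.tsum_eq_zero_add]
  simp [xx]

lemma count_eq (n : ℕ) : EE n (fun _ _ => 1) / 3 ^ n =
    1 - (2 / 3) * ∑ k ∈ Finset.range n, EE k (uu 1) / 3 ^ k := by
  have hw : (fun _ _ => 1 : ℕ → ℕ → ℝ) = ww 1 1 := by
    funext i j; simp [ww]
  rw [hw]
  induction n with
  | zero => simp [EE, ww]
  | succ n ih =>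
    rw [EE_succ_ww n 1 1 one_ne_zero one_ne_zero, Finset.sum_range_succ, mul_add, ← sub_sub, ← ih,
      pow_succ]
    field_simp
    ring

theorem stmt_7 :
    ∃ C : ℝ, 0 < C ∧ ∀ n : ℕ,
      |(numWalks n : ℝ) - alphaS * 3 ^ n| ≤ C * (2 * Real.sqrt 2) ^ n := by
  have hr : 0 < 1 - rr := by linarith [rr_lt]
  refine ⟨(2 / 3) * (1 - rr)⁻¹, by positivity, fun n => ?_⟩
  have h1 := count_eq n
  have hs := uu_summable zero_le_one le_rfl
  have h2 : ∑ k ∈ Finset.range n, EE k (uu 1) / 3 ^ k + ∑' k, EE (k + n) (uu 1) / 3 ^ (k + n) =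
      RR 1 := hs.sum_add_tsum_nat_add n
  have h3 : 0 ≤ ∑' k, EE (k + n) (uu 1) / 3 ^ (k + n) := by
    refine tsum_nonneg (fun k => ?_)
    have := EE_nonneg (k + n) (uu_nonneg zero_le_one)
    positivity
  have h4 : ∑' k, EE (k + n) (uu 1) / 3 ^ (k + n) ≤ rr ^ n * (1 - rr)⁻¹ := by
    rw [← tsum_geometric_of_lt_one rr_pos.le rr_lt, ← tsum_mul_left]
    refine Summable.tsum_le_tsum (fun k => ?_) ((summable_nat_add_iff n).2 hs)
      ((summable_geometric_of_lt_one rr_pos.le rr_lt).mul_left _)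
    rw [← pow_add, add_comm n k]
    exact uu_term_le _ zero_le_one le_rfl
  have h5 : (numWalks n : ℝ) - alphaS * 3 ^ n =
      (2 / 3) * (∑' k, EE (k + n) (uu 1) / 3 ^ (k + n)) * 3 ^ n := by
    rw [div_eq_iff (by positivity)] at h1
    rw [numWalks_eq, h1, alphaS, xx_sum, ← h2]
    ring
  have h6 : (2 * √2) ^ n = rr ^ n * 3 ^ n := by
    rw [← mul_pow, rr]; congr 1; ring
  rw [h5, abs_of_nonneg (by positivity), h6]
  calc _ ≤ (2 / 3) * (rr ^ n * (1 - rr)⁻¹) * 3 ^ n := by gcongr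
    _ = _ := by ring
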